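/- arXiv:math/0201140 — 2 statements merged into one kernel-verified Lean document; each statement's English description precedes it below -/
import Mathlib

section
/- For every n ≥ 3 and every integer k (with the convention D_{m,j}^* = 0 for j < 0): D_{n,k}^{0,≥2} = 2k·D_{n-1,k}^{0,≥2} + (2n-2k-1)·D_{n-1,k-1}^{0,≥2} + D_{n-1,k-1}^1 + D_{n-1,k}^{0,1} + D_{n-1,k-1}^{≥2}. -/
/-- A signed permutation of `{1,…,n}`, encoded as an (unsigned) permutation of
`Fin n` together with a choice of sign for each position.  The associated
word is `π_1 π_2 ⋯ π_n` where `π_j = ± σ(j)`. -/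
abbrev SignedPerm (n : ℕ) := Equiv.Perm (Fin n) × (Fin n → Bool)

namespace SignedPerm

/-- The letter `π_j` of the word of `p`, for `1 ≤ j ≤ n` (and `0` otherwise). -/
def word {n : ℕ} (p : SignedPerm n) (j : ℕ) : ℤ :=
  if h : 1 ≤ j ∧ j ≤ n then
    (if p.2 ⟨j - 1, by omega⟩ then -1 else 1) * ((p.1 ⟨j - 1, by omega⟩ : ℕ) + 1)
  else 0

/-- The letter `π_j`, with the type `D` convention `π_0 = -π_2`. -/
def entry {n : ℕ} (p : SignedPerm n) (j : ℕ) : ℤ :=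
  if j = 0 then -(p.word 2) else p.word j

/-- The set of `D`-descents of `p`: those `i ∈ {0,…,n-1}` with `π_i > π_{i+1}`. -/
def ddes {n : ℕ} (p : SignedPerm n) : Finset ℕ :=
  (Finset.range n).filter fun i => p.entry (i + 1) < p.entry i

/-- The number of `D`-descents of `p`. -/
def d {n : ℕ} (p : SignedPerm n) : ℕ := p.ddes.card

/-- Membership in the type `D` Coxeter group `D_n ⊆ B_n`:
the number of negative letters is even. -/
def inD {n : ℕ} (p : SignedPerm n) : Prop :=
  Even (Finset.univ.filter (fun i => p.2 i = true)).card

/-- Type '1': descent at position `1` but not at `0`. -/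
def type1 {n : ℕ} (p : SignedPerm n) : Prop := 1 ∈ p.ddes ∧ 0 ∉ p.ddes

/-- Type '0,1': descents at both positions `0` and `1`. -/
def type01 {n : ℕ} (p : SignedPerm n) : Prop := 0 ∈ p.ddes ∧ 1 ∈ p.ddes

/-- Type '≥2': no descent at positions `0` and `1`. -/
def typeGe2 {n : ℕ} (p : SignedPerm n) : Prop := 0 ∉ p.ddes ∧ 1 ∉ p.ddes

/-- Type '0,≥2': descent at position `0` but not at `1`. -/
def type0Ge2 {n : ℕ} (p : SignedPerm n) : Prop := 0 ∈ p.ddes ∧ 1 ∉ p.ddes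

instance {n : ℕ} (p : SignedPerm n) : Decidable p.inD := by
  unfold SignedPerm.inD; infer_instance
instance {n : ℕ} (p : SignedPerm n) : Decidable p.type1 := by
  unfold SignedPerm.type1; infer_instance
instance {n : ℕ} (p : SignedPerm n) : Decidable p.type01 := by
  unfold SignedPerm.type01; infer_instance
instance {n : ℕ} (p : SignedPerm n) : Decidable p.typeGe2 := by
  unfold SignedPerm.typeGe2; infer_instance
instance {n : ℕ} (p : SignedPerm n) : Decidable p.type0Ge2 := by
  unfold SignedPerm.type0Ge2; infer_instance

end SignedPerm

/-- The type `D` Eulerian number `D_{n,k}`: the number of elements of `D_n`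
with exactly `k` `D`-descents (zero for `k < 0`). -/
def eulerD (n : ℕ) (k : ℤ) : ℕ :=
  (Finset.univ.filter fun p : SignedPerm n => p.inD ∧ (p.d : ℤ) = k).card

/-- The sub-Eulerian number `D_{n,k}^1`. -/
def subEuler1 (n : ℕ) (k : ℤ) : ℕ :=
  (Finset.univ.filter fun p : SignedPerm n => p.inD ∧ p.type1 ∧ (p.d : ℤ) = k).card

/-- The sub-Eulerian number `D_{n,k}^{0,1}`. -/
def subEuler01 (n : ℕ) (k : ℤ) : ℕ :=
  (Finset.univ.filter fun p : SignedPerm n => p.inD ∧ p.type01 ∧ (p.d : ℤ) = k).card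

/-- The sub-Eulerian number `D_{n,k}^{≥2}`. -/
def subEulerGe2 (n : ℕ) (k : ℤ) : ℕ :=
  (Finset.univ.filter fun p : SignedPerm n => p.inD ∧ p.typeGe2 ∧ (p.d : ℤ) = k).card

/-- The sub-Eulerian number `D_{n,k}^{0,≥2}`. -/
def subEuler0Ge2 (n : ℕ) (k : ℤ) : ℕ :=
  (Finset.univ.filter fun p : SignedPerm n => p.inD ∧ p.type0Ge2 ∧ (p.d : ℤ) = k).card

/-- The type `D` Eulerian polynomial `D_n(t) = Σ_{π ∈ D_n} t^{d(π)}`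
(with `D_0(t) = D_1(t) = 1`). -/
noncomputable def polyD (n : ℕ) : Polynomial ℚ :=
  ∑ p ∈ Finset.univ.filter (fun p : SignedPerm n => p.inD), Polynomial.X ^ p.d

/-- The sub-Eulerian polynomial `D_n^1(t)`. -/
noncomputable def polyD1 (n : ℕ) : Polynomial ℚ :=
  ∑ p ∈ Finset.univ.filter (fun p : SignedPerm n => p.inD ∧ p.type1), Polynomial.X ^ p.d

/-- The sub-Eulerian polynomial `D_n^{0,1}(t)`. -/
noncomputable def polyD01 (n : ℕ) : Polynomial ℚ :=
  ∑ p ∈ Finset.univ.filter (fun p : SignedPerm n => p.inD ∧ p.type01), Polynomial.X ^ p.d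

/-- The sub-Eulerian polynomial `D_n^{≥2}(t)`. -/
noncomputable def polyDGe2 (n : ℕ) : Polynomial ℚ :=
  ∑ p ∈ Finset.univ.filter (fun p : SignedPerm n => p.inD ∧ p.typeGe2), Polynomial.X ^ p.d

/-- The sub-Eulerian polynomial `D_n^{0,≥2}(t)`. -/
noncomputable def polyD0Ge2 (n : ℕ) : Polynomial ℚ :=
  ∑ p ∈ Finset.univ.filter (fun p : SignedPerm n => p.inD ∧ p.type0Ge2), Polynomial.X ^ p.d

/-!
Changing the sign of the letter `±1` preserves the set of `D`-descents and exchanges `D_n` with its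
complement in the group `B_n` of all signed permutations. Every count by descent set over `D_n` is
therefore half of the same count over `B_n`, and it suffices to prove the recurrence in `B_n`, where
every element arises uniquely by inserting a letter `±n` into the word of some `q ∈ B_{n-1}`.

If `i` letters of `q` precede the inserted one, the result has descent set of type `0,≥2`
* for `i = 0`, exactly when the inserted letter is `-n`, whatever the type of `q`;
* for `i = 1`, never;
* for `i ≥ 2`, exactly when `q` itself is of type `0,≥2`.

For `i < n - 1` with `i ≠ 1`, the insertion destroys a descent of `q` at `i`, if there is one, and
creates exactly one new descent; at the end of the word, only `-n` creates a descent. Summing over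
`i` and the sign gives the contribution of each `q`.
-/

section SumCardErase

open Finset

theorem sum_apply_card_erase {α M : Type*} [DecidableEq α] [AddCommMonoid M] {s t : Finset α}
    (hst : s ⊆ t) (f : ℕ → M) :
    ∑ i ∈ t, f #(s.erase i) = #s • f (#s - 1) + (#t - #s) • f #s := by
  have h_mem : ∀ i ∈ s, f #(s.erase i) = f (#s - 1) := fun i hi => by rw [card_erase_of_mem hi]
  have h_notMem : ∀ i ∈ t \ s, f #(s.erase i) = f #s := fun i hi => by
    rw [erase_eq_of_notMem (mem_sdiff.1 hi).2]
  rw [← sum_sdiff hst, sum_congr rfl h_mem, sum_congr rfl h_notMem, sum_const, sum_const,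
    card_sdiff_of_subset hst, add_comm]

end SumCardErase

namespace SignedPerm

open Finset

section Entries

variable {n : ℕ} (p : SignedPerm n)

theorem word_add_one (j : Fin n) :
    p.word (j + 1) = (if p.2 j then -1 else 1) * ((p.1 j : ℕ) + 1) := by
  simp [word]

theorem word_eq_zero {j : ℕ} (hj : ¬(1 ≤ j ∧ j ≤ n)) : p.word j = 0 :=
  dif_neg hj

theorem abs_word_add_one (j : Fin n) : |p.word (j + 1)| = (p.1 j : ℕ) + 1 := by
  rw [word_add_one, abs_mul, abs_of_nonneg (by positivity : (0 : ℤ) ≤ (p.1 j : ℕ) + 1)]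
  split_ifs <;> simp

theorem abs_word_le (j : ℕ) : |p.word j| ≤ n := by
  by_cases hj : 1 ≤ j ∧ j ≤ n
  · have h := abs_word_add_one p ⟨j - 1, by omega⟩
    rw [Nat.sub_add_cancel hj.1] at h
    omega
  · simp [word_eq_zero p hj]

theorem abs_word_add_one_injective : Function.Injective fun j : Fin n => |p.word (j + 1)| := by
  intro i j hij
  simp only [abs_word_add_one, add_left_inj, Nat.cast_inj] at hij
  exact p.1.injective (Fin.ext hij)

theorem entry_zero : p.entry 0 = -p.word 2 := rfl

theorem entry_add_one (j : ℕ) : p.entry (j + 1) = p.word (j + 1) := rfl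

theorem abs_entry_add_one_ne (hn : 2 ≤ n) {t : ℕ} (ht : t < n) :
    |p.entry (t + 1)| ≠ |p.entry t| := by
  rcases t with _ | t
  · rw [entry_zero, entry_add_one, abs_neg]
    exact (abs_word_add_one_injective p).ne (a₁ := ⟨0, ht⟩) (a₂ := ⟨1, hn⟩) (by simp)
  · exact (abs_word_add_one_injective p).ne (a₁ := ⟨t + 1, ht⟩) (a₂ := ⟨t, by omega⟩) (by simp)

theorem word_add_one_ne_zero (j : Fin n) : p.word (j + 1) ≠ 0 :=
  abs_pos.1 (by rw [abs_word_add_one]; positivity)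

theorem entry_ne_zero (hn : 2 ≤ n) {j : ℕ} (hj : j ≤ n) : p.entry j ≠ 0 := by
  rcases j with _ | j
  · exact neg_ne_zero.2 (p.word_add_one_ne_zero ⟨1, hn⟩)
  · exact p.word_add_one_ne_zero ⟨j, hj⟩

theorem mem_ddes {t : ℕ} : t ∈ p.ddes ↔ t < n ∧ p.entry (t + 1) < p.entry t := by
  simp [ddes]

theorem ddes_subset_range : p.ddes ⊆ range n := filter_subset _ _

theorem self_notMem_ddes : n ∉ p.ddes := fun h =>
  (mem_range.1 (p.ddes_subset_range h)).false

end Entries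

section ToggleOne

variable {n : ℕ} [NeZero n] (p : SignedPerm n)

/-- The signed permutation obtained from `p` by changing the sign of its letter `±1` (whose
absolute value is encoded by `0 : Fin n`); this is an involution exchanging `D_n` with its
complement in `B_n`. -/
def toggleOne : SignedPerm n :=
  (p.1, Function.update p.2 (p.1.symm 0) (!p.2 (p.1.symm 0)))

theorem toggleOne_fst : p.toggleOne.1 = p.1 := rfl

theorem toggleOne_snd_self : p.toggleOne.2 (p.1.symm 0) = !p.2 (p.1.symm 0) :=
  Function.update_self ..

theorem toggleOne_snd_of_ne {i : Fin n} (hi : i ≠ p.1.symm 0) : p.toggleOne.2 i = p.2 i :=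
  Function.update_of_ne hi ..

theorem toggleOne_involutive : Function.Involutive (toggleOne (n := n)) := by
  intro p
  simp [toggleOne]

theorem inD_toggleOne : p.toggleOne.inD ↔ ¬p.inD := by
  have card_split (s : Fin n → Bool) (a : Fin n) :
      #{i | s i = true} = (s a).toNat + ∑ i ∈ univ.erase a, (s i).toNat := by
    rw [add_sum_erase _ (fun i => (s i).toNat) (mem_univ a), card_filter]
    exact sum_congr rfl fun i _ => by cases s i <;> rfl
  have h_rest : ∑ i ∈ univ.erase (p.1.symm 0), (p.toggleOne.2 i).toNat =
      ∑ i ∈ univ.erase (p.1.symm 0), (p.2 i).toNat :=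
    sum_congr rfl fun i hi => by rw [toggleOne_snd_of_ne p (ne_of_mem_erase hi)]
  rw [inD, inD, card_split _ (p.1.symm 0), card_split p.2 (p.1.symm 0), h_rest, toggleOne_snd_self]
  cases p.2 (p.1.symm 0) <;> simp [Nat.even_add_one, add_comm 1]

theorem word_toggleOne (j : ℕ) :
    p.toggleOne.word j = if |p.word j| = 1 then -p.word j else p.word j := by
  by_cases hj : 1 ≤ j ∧ j ≤ n
  · obtain ⟨i, rfl⟩ : ∃ i : Fin n, j = i + 1 := ⟨⟨j - 1, by omega⟩, (Nat.sub_add_cancel hj.1).symm⟩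
    have h_one : |p.word (i + 1)| = 1 ↔ i = p.1.symm 0 := by
      rw [abs_word_add_one, Equiv.eq_symm_apply, ← Fin.val_eq_zero_iff]
      omega
    rw [if_congr h_one rfl rfl, word_add_one, word_add_one]
    by_cases hi : i = p.1.symm 0
    · rw [if_pos hi, hi, toggleOne_snd_self, toggleOne_fst]
      cases p.2 (p.1.symm 0) <;> simp only [Bool.not_true, Bool.not_false, if_true, if_false,
        Bool.false_eq_true, neg_mul, neg_neg]
    · rw [if_neg hi, toggleOne_snd_of_ne p hi, toggleOne_fst]
  · rw [word_eq_zero _ hj, word_eq_zero _ hj, abs_zero, if_neg zero_ne_one]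

theorem entry_toggleOne (j : ℕ) :
    p.toggleOne.entry j = if |p.entry j| = 1 then -p.entry j else p.entry j := by
  rcases j with _ | j
  · simp only [entry_zero, word_toggleOne, abs_neg, apply_ite Neg.neg]
  · exact word_toggleOne p (j + 1)

-- Neighbouring letters have distinct absolute values, so the sign of `±1` affects no comparison.
theorem ddes_toggleOne (hn : 2 ≤ n) : p.toggleOne.ddes = p.ddes := by
  ext t
  simp only [mem_ddes, entry_toggleOne]
  refine and_congr_right fun ht => ?_
  have h_abs := p.abs_entry_add_one_ne hn ht
  have h_left := p.entry_ne_zero hn ht.le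
  have h_right := p.entry_ne_zero hn (Nat.succ_le_of_lt ht)
  grind

end ToggleOne

theorem card_filter_ddes {n : ℕ} (hn : 2 ≤ n) (Q : Finset ℕ → Prop) [DecidablePred Q] :
    #{p : SignedPerm n | Q p.ddes} = 2 * #{p : SignedPerm n | p.inD ∧ Q p.ddes} := by
  have : NeZero n := ⟨by omega⟩
  have h_compl : #{p : SignedPerm n | ¬p.inD ∧ Q p.ddes} = #{p : SignedPerm n | p.inD ∧ Q p.ddes} :=
    card_nbij' toggleOne toggleOne
      (fun p => by simp [inD_toggleOne, ddes_toggleOne _ hn])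
      (fun p => by simp [inD_toggleOne, ddes_toggleOne _ hn])
      (fun p _ => toggleOne_involutive p) (fun p _ => toggleOne_involutive p)
  rw [← card_filter_add_card_filter_not (fun p : SignedPerm n => p.inD), filter_filter,
    filter_filter]
  simp only [and_comm (a := Q _)]
  rw [h_compl, two_mul]

section InsertMax

variable {m : ℕ} (q : SignedPerm m) (i : Fin (m + 1)) (e : Bool)

/-- The signed permutation obtained from `q` by inserting the letter `m + 1`, with a minus sign if
`e = true`, so that it becomes the letter number `i + 1` of the word. -/
def insertMax : SignedPerm (m + 1) :=
  (((finSuccEquiv' i).trans (Equiv.optionCongr q.1)).trans finSuccEquivLast.symm,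
    i.insertNth e q.2)

@[simp]
theorem insertMax_fst_self : (insertMax q i e).1 i = Fin.last m := by
  simp [insertMax]

@[simp]
theorem insertMax_fst_succAbove (j : Fin m) :
    (insertMax q i e).1 (i.succAbove j) = (q.1 j).castSucc := by
  simp [insertMax]

@[simp]
theorem insertMax_snd_self : (insertMax q i e).2 i = e := by
  simp [insertMax]

@[simp]
theorem insertMax_snd_succAbove (j : Fin m) : (insertMax q i e).2 (i.succAbove j) = q.2 j := by
  simp [insertMax]

theorem insertMax_bijective : Function.Bijective fun x : SignedPerm m × Fin (m + 1) × Bool =>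
    insertMax x.1 x.2.1 x.2.2 := by
  rw [Fintype.bijective_iff_injective_and_card]
  constructor
  · rintro ⟨⟨σ, s⟩, i, e⟩ ⟨⟨σ', s'⟩, i', e'⟩ h
    dsimp only at h
    obtain rfl : i = i' := (insertMax (σ, s) i e).1.injective <| by
      rw [insertMax_fst_self, h, insertMax_fst_self]
    obtain rfl : σ = σ' := Equiv.ext fun j => Fin.castSucc_injective m <| by
      rw [← insertMax_fst_succAbove (σ, s) i e, h, insertMax_fst_succAbove]
    obtain ⟨rfl, rfl⟩ := (Fin.insertNth_inj (α := fun _ => Bool)).1 (congrArg Prod.snd h)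
    rfl
  · simp only [Fintype.card_prod, Fintype.card_perm, Fintype.card_fin, Fintype.card_bool,
      Fintype.card_pi, prod_const, card_univ, Nat.factorial_succ, pow_succ]
    ring

theorem word_insertMax_self : (insertMax q i e).word (i + 1) = (if e then -1 else 1) * (m + 1) := by
  simp [word_add_one]

theorem word_insertMax_succAbove (j : Fin m) :
    (insertMax q i e).word (i.succAbove j + 1) = q.word (j + 1) := by
  simp [word_add_one]

variable {i}

theorem word_insertMax_of_le {j : ℕ} (hj : j ≤ i) : (insertMax q i e).word j = q.word j := by
  rcases j with _ | j
  · simp [word]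
  · have h := word_insertMax_succAbove q i e ⟨j, by omega⟩
    rwa [Fin.succAbove_of_castSucc_lt _ _ (show j < (i : ℕ) from hj)] at h

theorem word_insertMax_of_lt {j : ℕ} (hj : i < j) : (insertMax q i e).word (j + 1) = q.word j := by
  obtain ⟨l, rfl⟩ := Nat.exists_eq_add_one_of_ne_zero (Nat.ne_zero_of_lt hj)
  by_cases hl : l < m
  · have h := word_insertMax_succAbove q i e ⟨l, hl⟩
    rwa [Fin.succAbove_of_le_castSucc _ _ (Fin.le_def.2 (Nat.le_of_lt_succ hj))] at h
  · rw [word_eq_zero _ (by omega), word_eq_zero _ (by omega)]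

theorem entry_insertMax_of_le (hi : 2 ≤ (i : ℕ)) {j : ℕ} (hj : j ≤ i) :
    (insertMax q i e).entry j = q.entry j := by
  rcases j with _ | j
  · rw [entry_zero, entry_zero, word_insertMax_of_le q e hi]
  · exact word_insertMax_of_le q e hj

theorem entry_insertMax_of_lt {j : ℕ} (hj : i < j) :
    (insertMax q i e).entry (j + 1) = q.entry j := by
  obtain ⟨l, rfl⟩ := Nat.exists_eq_add_one_of_ne_zero (Nat.ne_zero_of_lt hj)
  exact word_insertMax_of_lt q e hj

theorem abs_entry_insertMax_self_le : |(insertMax q i e).entry i| ≤ m := by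
  rcases hi : (i : ℕ) with _ | j
  · rw [entry_zero, abs_neg, word_insertMax_of_lt q e (by omega)]
    exact q.abs_word_le 1
  · rw [entry_add_one, word_insertMax_of_le q e hi.ge]
    exact q.abs_word_le (j + 1)

theorem mem_ddes_insertMax_of_lt (hi : (i : ℕ) ≠ 1) {t : ℕ} (ht : t < i) :
    t ∈ (insertMax q i e).ddes ↔ t ∈ q.ddes := by
  have h_two : 2 ≤ (i : ℕ) := by omega
  rw [mem_ddes, mem_ddes, entry_insertMax_of_le q e h_two ht, entry_insertMax_of_le q e h_two ht.le,
    and_iff_right (ht.trans i.is_lt), and_iff_right (ht.trans_le (Nat.le_of_lt_succ i.is_lt))]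

theorem mem_ddes_insertMax_self : (i : ℕ) ∈ (insertMax q i e).ddes ↔ e = true := by
  have h_le := abs_le.1 (abs_entry_insertMax_self_le q e (i := i))
  rw [mem_ddes, entry_add_one, word_insertMax_self, and_iff_right i.is_lt]
  grind

theorem add_one_mem_ddes_insertMax_self :
    (i : ℕ) + 1 ∈ (insertMax q i e).ddes ↔ (i : ℕ) < m ∧ e = false := by
  have h_le := abs_le.1 (q.abs_word_le (i + 1))
  rw [mem_ddes, entry_add_one, entry_add_one, word_insertMax_self,
    word_insertMax_of_lt q e (Nat.lt_succ_self _), Nat.add_lt_add_iff_right]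
  grind

theorem add_one_mem_ddes_insertMax_of_lt {t : ℕ} (ht : i < t) :
    t + 1 ∈ (insertMax q i e).ddes ↔ t ∈ q.ddes := by
  rw [mem_ddes, mem_ddes, entry_insertMax_of_lt q e ht, entry_insertMax_of_lt q e (by omega),
    Nat.add_lt_add_iff_right]

theorem zero_mem_ddes_insertMax_one (hi : (i : ℕ) = 1) :
    0 ∈ (insertMax q i e).ddes ↔ e = true := by
  have h_two : (insertMax q i e).word 2 = (if e then -1 else 1) * (m + 1) := by
    rw [← word_insertMax_self q i e, hi]
  have h_le := abs_le.1 (q.abs_word_le 1)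
  rw [mem_ddes, entry_zero, entry_add_one, h_two, word_insertMax_of_le q e (by omega)]
  grind

theorem ddes_insertMax (hi : (i : ℕ) ≠ 1) (him : (i : ℕ) < m) :
    (insertMax q i e).ddes =
      insert (if e then (i : ℕ) else i + 1)
        ((q.ddes.erase i).image fun t => if t < (i : ℕ) then t else t + 1) := by
  ext t
  simp only [mem_insert, mem_image, mem_erase]
  rcases lt_trichotomy t i with ht | rfl | ht
  · rw [mem_ddes_insertMax_of_lt q e hi ht]
    grind
  · rw [mem_ddes_insertMax_self]
    grind
  · obtain ⟨s, rfl⟩ := Nat.exists_eq_add_one_of_ne_zero (Nat.ne_zero_of_lt ht)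
    rcases (Nat.le_of_lt_succ ht).eq_or_lt with rfl | hs
    · rw [add_one_mem_ddes_insertMax_self]
      grind
    · rw [add_one_mem_ddes_insertMax_of_lt q e hs]
      grind

theorem d_insertMax (hi : (i : ℕ) ≠ 1) (him : (i : ℕ) < m) :
    (insertMax q i e).d = #(q.ddes.erase i) + 1 := by
  have h_inj : Function.Injective fun t : ℕ => if t < (i : ℕ) then t else t + 1 := by
    intro s t; grind
  rw [d, ddes_insertMax q e hi him, card_insert_of_notMem, card_image_of_injective _ h_inj]
  grind

theorem ddes_insertMax_last (hm : m ≠ 1) :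
    (insertMax q (Fin.last m) e).ddes = if e then insert m q.ddes else q.ddes := by
  have h_notMem := q.self_notMem_ddes
  ext t
  rcases lt_trichotomy t m with ht | rfl | ht
  · rw [mem_ddes_insertMax_of_lt q e (i := Fin.last m) hm ht]
    grind
  · have h := mem_ddes_insertMax_self q e (i := Fin.last t)
    rw [Fin.val_last] at h
    grind
  · have h := (insertMax q (Fin.last m) e).ddes_subset_range (x := t)
    have h' := q.ddes_subset_range (x := t)
    grind

theorem d_insertMax_last (hm : m ≠ 1) : (insertMax q (Fin.last m) e).d = q.d + e.toNat := by
  rw [d, ddes_insertMax_last q e hm]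
  cases e
  · rfl
  · exact card_insert_of_notMem q.self_notMem_ddes

end InsertMax

section InsertionWeights

variable {m : ℕ} (q : SignedPerm m) {i : Fin (m + 1)} (e : Bool)

theorem type0Ge2_insertMax_zero : (insertMax q 0 e).type0Ge2 ↔ e = true := by
  have h_zero := mem_ddes_insertMax_self q e (i := 0)
  have h_one := add_one_mem_ddes_insertMax_self q e (i := 0)
  rw [Fin.val_zero] at h_zero h_one
  rw [type0Ge2, h_zero, h_one]
  grind

theorem not_type0Ge2_insertMax_one (hi : (i : ℕ) = 1) : ¬(insertMax q i e).type0Ge2 := by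
  have h_one := mem_ddes_insertMax_self q e (i := i)
  rw [hi] at h_one
  rw [type0Ge2, zero_mem_ddes_insertMax_one q e hi, h_one]
  exact and_not_self

theorem type0Ge2_insertMax_of_two_le (hi : 2 ≤ (i : ℕ)) :
    (insertMax q i e).type0Ge2 ↔ q.type0Ge2 := by
  rw [type0Ge2, type0Ge2, mem_ddes_insertMax_of_lt q e (by omega) (by omega),
    mem_ddes_insertMax_of_lt q e (by omega) (by omega)]

variable {M : Type*} [AddCommMonoid M] (f : ℕ → M)

theorem sum_type0Ge2_insertMax_zero (hm : 0 < m) :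
    ∑ e with (insertMax q 0 e).type0Ge2, f (insertMax q 0 e).d = f (#(q.ddes.erase 0) + 1) := by
  simp [type0Ge2_insertMax_zero, d_insertMax q _ (i := 0) (by simp) hm, filter_eq']

theorem sum_type0Ge2_insertMax_one (hi : (i : ℕ) = 1) :
    ∑ e with (insertMax q i e).type0Ge2, f (insertMax q i e).d = 0 := by
  simp [not_type0Ge2_insertMax_one q _ hi]

theorem sum_type0Ge2_insertMax_of_two_le (hi : 2 ≤ (i : ℕ)) (him : (i : ℕ) < m) :
    ∑ e with (insertMax q i e).type0Ge2, f (insertMax q i e).d =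
      if q.type0Ge2 then 2 • f (#(q.ddes.erase i) + 1) else 0 := by
  simp only [type0Ge2_insertMax_of_two_le q _ hi, d_insertMax q _ (by omega : (i : ℕ) ≠ 1) him]
  split_ifs with hq <;> simp [hq, two_nsmul]

theorem sum_type0Ge2_insertMax_last (hm : 2 ≤ m) :
    ∑ e with (insertMax q (Fin.last m) e).type0Ge2, f (insertMax q (Fin.last m) e).d =
      if q.type0Ge2 then f q.d + f (q.d + 1) else 0 := by
  simp only [type0Ge2_insertMax_of_two_le q _ (i := Fin.last m) hm, d_insertMax_last q _ (by omega)]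
  split_ifs with hq <;> simp [hq, add_comm]

theorem sum_insertMax_of_not_type0Ge2 (hm : 0 < m) (hq : ¬q.type0Ge2) :
    ∑ i, ∑ e with (insertMax q i e).type0Ge2, f (insertMax q i e).d =
      f (#(q.ddes.erase 0) + 1) := by
  rw [Fintype.sum_eq_single 0, sum_type0Ge2_insertMax_zero q f hm]
  intro i hi
  have h_pos : (i : ℕ) ≠ 0 := Fin.val_ne_zero_iff.2 hi
  by_cases h_one : (i : ℕ) = 1
  · exact sum_type0Ge2_insertMax_one q f h_one
  · exact sum_eq_zero fun e he =>
      absurd ((type0Ge2_insertMax_of_two_le q e (by omega)).1 (mem_filter.1 he).2) hq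

end InsertionWeights

theorem sum_insertMax_of_type0Ge2 {M : Type*} [AddCommGroup M] {m : ℕ} (q : SignedPerm m)
    (f : ℕ → M) (hm : 2 ≤ m) (hq : q.type0Ge2) :
    ∑ i, ∑ e with (insertMax q i e).type0Ge2, f (insertMax q i e).d =
      (2 * q.d : ℤ) • f q.d + (2 * m - 2 * q.d - 1 : ℤ) • f (q.d + 1) := by
  have h_zero : #(q.ddes.erase 0) + 1 = q.d := card_erase_add_one hq.1
  have h_one : #(q.ddes.erase 1) = q.d := by rw [erase_eq_of_notMem hq.2, d]
  have h_position (i : Fin m) :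
      ∑ e with (insertMax q i.castSucc e).type0Ge2, f (insertMax q i.castSucc e).d =
        2 • f (#(q.ddes.erase i) + 1) - (if (i : ℕ) = 0 then f q.d else 0) -
          (if (i : ℕ) = 1 then 2 • f (q.d + 1) else 0) := by
    rcases lt_trichotomy (i : ℕ) 1 with hi | hi | hi
    · have hi0 : (i : ℕ) = 0 := by omega
      rw [show i.castSucc = 0 from Fin.ext hi0, sum_type0Ge2_insertMax_zero q f (by omega), hi0,
        h_zero]
      simp [two_nsmul]
    · rw [sum_type0Ge2_insertMax_one q f (i := i.castSucc) hi, hi, h_one]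
      simp
    · rw [sum_type0Ge2_insertMax_of_two_le q f (i := i.castSucc) hi i.is_lt, if_pos hq]
      simp [hi.ne', (zero_lt_one.trans hi).ne']
  have h_sum :
      ∑ i : Fin m, f (#(q.ddes.erase i) + 1) = q.d • f q.d + (m - q.d : ℤ) • f (q.d + 1) := by
    have h_le : q.d ≤ m := by simpa [d] using card_le_card q.ddes_subset_range
    rw [Fin.sum_univ_eq_sum_range (fun i => f (#(q.ddes.erase i) + 1)),
      sum_apply_card_erase q.ddes_subset_range (fun j => f (j + 1)), ← card_erase_of_mem hq.1,
      h_zero, card_range, ← d, ← natCast_zsmul _ (m - q.d), Nat.cast_sub h_le]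
  rw [Fin.sum_univ_castSucc, sum_type0Ge2_insertMax_last q f hm, if_pos hq,
    sum_congr rfl fun i _ => h_position i, sum_sub_distrib, sum_sub_distrib, sum_nsmul, h_sum,
    Fin.sum_univ_eq_sum_range (fun i => if i = 0 then f q.d else 0),
    Fin.sum_univ_eq_sum_range (fun i => if i = 1 then 2 • f (q.d + 1) else 0), sum_ite_eq',
    sum_ite_eq', if_pos (mem_range.2 (by omega)), if_pos (mem_range.2 (by omega))]
  module

theorem sum_insertMax {M : Type*} [AddCommGroup M] {m : ℕ} (q : SignedPerm m) (f : ℕ → M)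
    (hm : 2 ≤ m) :
    ∑ i, ∑ e with (insertMax q i e).type0Ge2, f (insertMax q i e).d =
      (if q.type0Ge2 then
          (2 * q.d : ℤ) • f q.d + (2 * m - 2 * q.d - 1 : ℤ) • f (q.d + 1) else 0) +
        (if q.type1 then f (q.d + 1) else 0) + (if q.type01 then f q.d else 0) +
        (if q.typeGe2 then f (q.d + 1) else 0) := by
  by_cases h_type : q.type0Ge2
  · rw [sum_insertMax_of_type0Ge2 q f hm h_type]
    simp [type0Ge2, type1, type01, typeGe2, h_type.1, h_type.2]
  · rw [sum_insertMax_of_not_type0Ge2 q f (by omega) h_type]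
    by_cases h_zero : 0 ∈ q.ddes
    · have h_one : 1 ∈ q.ddes := by simpa [type0Ge2, h_zero] using h_type
      rw [card_erase_add_one h_zero]
      simp [type0Ge2, type1, type01, typeGe2, h_zero, h_one, d]
    · rw [erase_eq_of_notMem h_zero]
      by_cases h_one : 1 ∈ q.ddes <;>
        simp [type0Ge2, type1, type01, typeGe2, h_zero, h_one, d]

theorem sum_type0Ge2_succ {M : Type*} [AddCommGroup M] {m : ℕ} (hm : 2 ≤ m) (f : ℕ → M) :
    ∑ p : SignedPerm (m + 1) with p.type0Ge2, f p.d =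
      ∑ q : SignedPerm m with q.type0Ge2,
          ((2 * q.d : ℤ) • f q.d + (2 * m - 2 * q.d - 1 : ℤ) • f (q.d + 1)) +
        ∑ q : SignedPerm m with q.type1, f (q.d + 1) +
        ∑ q : SignedPerm m with q.type01, f q.d +
        ∑ q : SignedPerm m with q.typeGe2, f (q.d + 1) := by
  have h_insert (q : SignedPerm m) := sum_insertMax q f hm
  simp only [sum_filter] at h_insert ⊢
  rw [← insertMax_bijective.sum_comp]
  simp only [Fintype.sum_prod_type, h_insert, sum_add_distrib]

theorem card_type0Ge2_succ {m : ℕ} (hm : 2 ≤ m) (k : ℤ) :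
    (#{p : SignedPerm (m + 1) | p.type0Ge2 ∧ (p.d : ℤ) = k} : ℤ) =
      2 * k * #{q : SignedPerm m | q.type0Ge2 ∧ (q.d : ℤ) = k} +
        (2 * (m + 1) - 2 * k - 1) * #{q : SignedPerm m | q.type0Ge2 ∧ (q.d : ℤ) = k - 1} +
        #{q : SignedPerm m | q.type1 ∧ (q.d : ℤ) = k - 1} +
        #{q : SignedPerm m | q.type01 ∧ (q.d : ℤ) = k} +
        #{q : SignedPerm m | q.typeGe2 ∧ (q.d : ℤ) = k - 1} := by
  have h_sum := sum_type0Ge2_succ hm fun j => if (j : ℤ) = k then (1 : ℤ) else 0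
  have h_weight (d : ℕ) :
      2 * (d : ℤ) * (if (d : ℤ) = k then 1 else 0) +
          (2 * m - 2 * d - 1) * (if ((d + 1 : ℕ) : ℤ) = k then 1 else 0) =
        2 * k * (if (d : ℤ) = k then 1 else 0) +
          (2 * (m + 1) - 2 * k - 1) * (if (d : ℤ) = k - 1 then 1 else 0) := by
    grind
  have h_shift (d : ℕ) : ((d + 1 : ℕ) : ℤ) = k ↔ (d : ℤ) = k - 1 := by omega
  simp only [smul_eq_mul, h_weight, sum_add_distrib, ← mul_sum] at h_sum
  simpa only [h_shift, sum_boole, filter_filter] using h_sum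

section Halving

variable {n : ℕ}

theorem card_type1 (hn : 2 ≤ n) (k : ℤ) :
    #{p : SignedPerm n | p.type1 ∧ (p.d : ℤ) = k} = 2 * subEuler1 n k :=
  card_filter_ddes hn fun s => (1 ∈ s ∧ 0 ∉ s) ∧ (#s : ℤ) = k

theorem card_type01 (hn : 2 ≤ n) (k : ℤ) :
    #{p : SignedPerm n | p.type01 ∧ (p.d : ℤ) = k} = 2 * subEuler01 n k :=
  card_filter_ddes hn fun s => (0 ∈ s ∧ 1 ∈ s) ∧ (#s : ℤ) = k

theorem card_typeGe2 (hn : 2 ≤ n) (k : ℤ) :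
    #{p : SignedPerm n | p.typeGe2 ∧ (p.d : ℤ) = k} = 2 * subEulerGe2 n k :=
  card_filter_ddes hn fun s => (0 ∉ s ∧ 1 ∉ s) ∧ (#s : ℤ) = k

theorem card_type0Ge2 (hn : 2 ≤ n) (k : ℤ) :
    #{p : SignedPerm n | p.type0Ge2 ∧ (p.d : ℤ) = k} = 2 * subEuler0Ge2 n k :=
  card_filter_ddes hn fun s => (0 ∈ s ∧ 1 ∉ s) ∧ (#s : ℤ) = k

end Halving

end SignedPerm

/-- **Proposition 3.2 (iv).** Recurrence for the sub-Eulerian numbers `D_{n,k}^{0,≥2}`. -/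
theorem subEuler0Ge2_recurrence (n : ℕ) (hn : 3 ≤ n) (k : ℤ) :
    (subEuler0Ge2 n k : ℤ) =
      2 * k * subEuler0Ge2 (n - 1) k
        + (2 * (n : ℤ) - 2 * k - 1) * subEuler0Ge2 (n - 1) (k - 1)
        + subEuler1 (n - 1) (k - 1) + subEuler01 (n - 1) k + subEulerGe2 (n - 1) (k - 1) := by
  obtain ⟨m, rfl⟩ := Nat.exists_eq_add_one_of_ne_zero (by omega : n ≠ 0)
  have hm : 2 ≤ m := by omega
  have h_succ := SignedPerm.card_type0Ge2_succ hm k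
  rw [SignedPerm.card_type0Ge2 (by omega), SignedPerm.card_type0Ge2 hm,
    SignedPerm.card_type0Ge2 hm, SignedPerm.card_type1 hm, SignedPerm.card_type01 hm,
    SignedPerm.card_typeGe2 hm] at h_succ
  rw [Nat.add_sub_cancel]
  push_cast at h_succ ⊢
  linarith
end

section
/- For every n ≥ 2, the following identity holds in the ring ℚ⟦t⟧ of formal power series in t: D_n^{0,≥2}(t) = t·(1-t)^{n-1}·Σ_{k≥0} (2^{n-1}·((k+1)^n + k^n) - (2k+1)^n)·t^k, and the same identity holds with D_n^{0,≥2}(t) replaced by D_n^1(t). -/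
/-! Sum over all signed permutations, with `des_A` counting the descents of `π_1 ⋯ π_n` and `des_B`
those of `0 π_1 ⋯ π_n`. Changing the sign of `π_1` preserves the descents of `π_2 ⋯ π_n`, and when
the two partners are added up, `(1 + t) t^{des_A} - 2 t^{des_B}` becomes
`(1 - t)^2 t^{des(π_2 ⋯ π_n)}` if `|π_2| < |π_1|` and `0` otherwise. The condition `|π_2| < |π_1|`
says that exactly one of `0` and `1` is a `D`-descent, the sign of `π_1` telling which; changing the
sign of the letter `±1` shows that even and odd permutations contribute equally. So the
sub-Eulerian polynomials are determined by the sums of `t^{des_A}` and `t^{des_B}` over signed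
permutations. These come from counting all integer labellings of the letters in a box: sorting the
labelled letters lexicographically splits the box into the `P`-partitions of the individual words.
-/

open scoped Finset

section LexChains

variable {α : Type*} [LinearOrder α] {n : ℕ}

/-- The number of descents `w (i + 1) < w i` of a nonempty word. -/
def desCount (w : Fin (n + 1) → α) : ℕ :=
  ∑ i : Fin n, if w i.succ < w i.castSucc then 1 else 0

/-- The word-compatible sequences of the theory of `P`-partitions: `0 = c 0 ≤ ⋯ ≤ c n ≤ k`, with a
strict increase at every descent of `w`. The two conditions amount to the pairs `(c i, w i)`
increasing weakly in the lexicographic order. -/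
def lexChains (w : Fin (n + 1) → α) (k : ℕ) : Finset (Fin (n + 1) → ℕ) :=
  {c ∈ Fintype.piFinset fun _ ↦ Finset.range (k + 1) |
    c 0 = 0 ∧ Monotone fun i ↦ toLex (c i, w i)}

theorem desCount_cons (b : α) (w : Fin (n + 1) → α) :
    desCount (Fin.cons b w : Fin (n + 2) → α) = (if w 0 < b then 1 else 0) + desCount w := by
  simp only [desCount, Fin.sum_univ_succ (n := n)]
  rfl

theorem desCount_snoc (w : Fin (n + 1) → α) (a : α) :
    desCount (Fin.snoc w a : Fin (n + 2) → α) =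
      desCount w + if a < w (Fin.last n) then 1 else 0 := by
  simp only [desCount, Fin.sum_univ_castSucc (n := n), ← Fin.castSucc_succ, Fin.snoc_castSucc,
    Fin.succ_last, Fin.snoc_last]

theorem toLex_le_toLex_iff_add_ite_le {x y : ℕ} {a b : α} :
    toLex (x, a) ≤ toLex (y, b) ↔ x + (if b < a then 1 else 0) ≤ y := by
  rw [Prod.Lex.toLex_le_toLex]
  split_ifs with h
  · simp [h]
  · simp [not_lt.mp h, le_iff_lt_or_eq]

theorem mem_lexChains {w : Fin (n + 1) → α} {k : ℕ} {c : Fin (n + 1) → ℕ} :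
    c ∈ lexChains w k ↔
      c 0 = 0 ∧ c (Fin.last n) ≤ k ∧ Monotone fun i ↦ toLex (c i, w i) := by
  simp only [lexChains, Finset.mem_filter, Fintype.mem_piFinset, Finset.mem_range, Nat.lt_succ_iff]
  refine ⟨fun ⟨hk, h0, hc⟩ ↦ ⟨h0, hk _, hc⟩, fun ⟨h0, hk, hc⟩ ↦ ⟨fun i ↦ ?_, h0, hc⟩⟩
  exact (Prod.Lex.monotone_fst_ofLex (hc (Fin.le_last i))).trans hk

theorem snoc_mem_lexChains_snoc {w : Fin (n + 1) → α} {a : α} {c : Fin (n + 1) → ℕ} {j k : ℕ} :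
    (Fin.snoc c j : Fin (n + 2) → ℕ) ∈ lexChains (Fin.snoc w a : Fin (n + 2) → α) k ↔
      j ≤ k ∧ (if a < w (Fin.last n) then 1 else 0) ≤ j ∧
        c ∈ lexChains w (j - if a < w (Fin.last n) then 1 else 0) := by
  simp only [mem_lexChains, Fin.monotone_iff_le_succ, Fin.forall_fin_succ' (n := n),
    Fin.snoc_apply_zero, Fin.snoc_last, Fin.snoc_castSucc, Fin.succ_last, ← Fin.castSucc_succ,
    toLex_le_toLex_iff_add_ite_le]
  grind

theorem card_filter_lexChains_snoc_last_eq (w : Fin (n + 1) → α) (a : α) {j k : ℕ} (hjk : j ≤ k) :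
    #{c ∈ lexChains (Fin.snoc w a : Fin (n + 2) → α) k | c (Fin.last (n + 1)) = j} =
      if (if a < w (Fin.last n) then 1 else 0) ≤ j then
        #(lexChains w (j - if a < w (Fin.last n) then 1 else 0)) else 0 := by
  set δ := if a < w (Fin.last n) then 1 else 0 with hδ
  have fiber_eq : {c ∈ lexChains (Fin.snoc w a : Fin (n + 2) → α) k | c (Fin.last (n + 1)) = j} =
      if δ ≤ j then (lexChains w (j - δ)).image (Fin.snoc · j) else ∅ := by
    ext c
    induction c using Fin.snocCases with | snoc c i => ?_
    simp only [Finset.mem_filter, snoc_mem_lexChains_snoc, Fin.snoc_last, ← hδ]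
    split_ifs with hj
    · simp only [Finset.mem_image, Fin.snoc_inj]
      grind
    · simp only [Finset.notMem_empty, iff_false]
      grind
  rw [fiber_eq, apply_ite Finset.card, Finset.card_empty,
    Finset.card_image_of_injective _ (Fin.snoc_left_injective (α := fun _ ↦ ℕ) j)]

theorem card_lexChains_snoc (w : Fin (n + 1) → α) (a : α) (k : ℕ) :
    #(lexChains (Fin.snoc w a : Fin (n + 2) → α) k) =
      ∑ j ∈ Finset.range (k + 1), if (if a < w (Fin.last n) then 1 else 0) ≤ j then
        #(lexChains w (j - if a < w (Fin.last n) then 1 else 0)) else 0 := by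
  rw [Finset.card_eq_sum_card_fiberwise (f := fun c ↦ c (Fin.last (n + 1)))
    (t := Finset.range (k + 1))
    fun c hc ↦ by simpa [Nat.lt_succ_iff] using (mem_lexChains.mp hc).2.1]
  exact Finset.sum_congr rfl fun j hj ↦
    card_filter_lexChains_snoc_last_eq w a (Finset.mem_range_succ_iff.mp hj)

open PowerSeries

variable {R : Type*} [CommRing R]

theorem one_sub_X_mul_mk_sum_range_succ (f : ℕ → R) :
    (1 - X) * mk (fun k ↦ ∑ j ∈ Finset.range (k + 1), f j) = mk f := by
  ext (_ | k)
  · simp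
  · simp [sub_mul, coeff_succ_X_mul, Finset.sum_range_succ]

theorem card_lexChains_fin_one (w : Fin 1 → α) (k : ℕ) : #(lexChains w k) = 1 := by
  refine Finset.card_eq_one.mpr ⟨0, Finset.ext fun c ↦ ?_⟩
  rw [mem_lexChains, Finset.mem_singleton]
  refine ⟨fun h ↦ funext fun i : Fin 1 ↦ ?_, ?_⟩
  · rw [Subsingleton.elim i 0, Pi.zero_apply]
    exact h.1
  · rintro rfl
    exact ⟨rfl, k.zero_le, Subsingleton.monotone (α := Fin 1) _⟩

theorem one_sub_X_pow_mul_mk_card_lexChains (w : Fin (n + 1) → α) :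
    (1 - X) ^ (n + 1) * mk (fun k ↦ (#(lexChains w k) : R)) = X ^ desCount w := by
  induction n with
  | zero =>
    simpa [card_lexChains_fin_one, desCount, mul_comm] using! mk_one_mul_one_sub_eq_one R
  | succ n ih =>
    induction w using Fin.snocCases with | snoc w a => ?_
    rw [desCount_snoc, pow_add X, ← ih, pow_succ, mul_assoc, mul_assoc]
    simp only [card_lexChains_snoc, Nat.cast_sum, one_sub_X_mul_mk_sum_range_succ]
    congr 1
    ext j
    rw [coeff_mk, coeff_mul_X_pow', coeff_mk, Nat.cast_ite, Nat.cast_zero]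

end LexChains

section Worpitzky

variable {α : Type*} [LinearOrder α] {n : ℕ}

theorem monotone_cons_iff {β : Type*} [Preorder β] {x : β} {f : Fin n → β} :
    Monotone (Fin.cons x f : Fin (n + 1) → β) ↔ (∀ i, x ≤ f i) ∧ Monotone f := by
  simp only [Monotone, Fin.forall_fin_succ, Fin.cons_zero, Fin.cons_succ, le_refl, Fin.zero_le,
    forall_const, true_and, Fin.succ_le_succ_iff, Fin.le_zero_iff, Fin.succ_ne_zero,
    IsEmpty.forall_iff]

theorem sort_eq_iff_monotone_comp {β : Type*} [LinearOrder β] {f : Fin n → β}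
    (hf : f.Injective) {σ : Equiv.Perm (Fin n)} : Tuple.sort f = σ ↔ Monotone (f ∘ σ) := by
  rw [eq_comm, Tuple.eq_sort_iff]
  exact and_iff_left fun i j hij h ↦ absurd (σ.injective (hf h)) hij.ne

theorem mem_Icc_ite_iff {x b : α} {j k : ℕ} :
    j ∈ Finset.Icc (if b ≤ x then 0 else 1) k ↔ j ≤ k ∧ toLex (0, b) ≤ toLex (j, x) := by
  rw [toLex_le_toLex_iff_add_ite_le, Finset.mem_Icc]
  grind

theorem cons_zero_comp_mem_lexChains {a : Fin n → α} (ha : a.Injective) {b : α} {k : ℕ}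
    {σ : Equiv.Perm (Fin n)} {f : Fin n → ℕ} :
    (Fin.cons 0 (f ∘ σ) : Fin (n + 1) → ℕ) ∈ lexChains (Fin.cons b (a ∘ σ) : Fin (n + 1) → α) k ↔
      f ∈ Fintype.piFinset (fun v ↦ Finset.Icc (if b ≤ a v then 0 else 1) k) ∧
        Tuple.sort (fun v ↦ toLex (f v, a v)) = σ := by
  have pairs_injective : (fun v ↦ toLex (f v, a v)).Injective :=
    fun v w h ↦ ha (Prod.ext_iff.mp (toLex_inj.mp h)).2
  have pairs_cons : (fun i ↦ toLex ((Fin.cons 0 (f ∘ σ) : Fin (n + 1) → ℕ) i,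
      (Fin.cons b (a ∘ σ) : Fin (n + 1) → α) i)) =
      Fin.cons (toLex (0, b)) ((fun v ↦ toLex (f v, a v)) ∘ σ) :=
    funext (Fin.cases rfl fun _ ↦ rfl)
  simp only [lexChains, Finset.mem_filter, pairs_cons, monotone_cons_iff, Fintype.mem_piFinset,
    Finset.mem_range_succ_iff, mem_Icc_ite_iff, sort_eq_iff_monotone_comp pairs_injective,
    Fin.forall_fin_succ, Fin.cons_zero, Fin.cons_succ, Function.comp_apply, zero_le, true_and,
    forall_and, and_assoc,
    σ.forall_congr_right (q := fun v ↦ f v ≤ k),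
    σ.forall_congr_right (q := fun v ↦ toLex (0, b) ≤ toLex (f v, a v))]

theorem card_filter_sort_eq_card_lexChains {a : Fin n → α} (ha : a.Injective) (b : α) (k : ℕ)
    (σ : Equiv.Perm (Fin n)) :
    #{f ∈ Fintype.piFinset fun v ↦ Finset.Icc (if b ≤ a v then 0 else 1) k |
        Tuple.sort (fun v ↦ toLex (f v, a v)) = σ} =
      #(lexChains (Fin.cons b (a ∘ σ) : Fin (n + 1) → α) k) := by
  refine Finset.card_bij (fun f _ ↦ Fin.cons 0 (f ∘ σ)) (fun f hf ↦ ?_) (fun f _ g _ h ↦ ?_)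
    fun c hc ↦ ?_
  · exact (cons_zero_comp_mem_lexChains ha).mpr (Finset.mem_filter.mp hf)
  · exact σ.surjective.injective_comp_right (Fin.cons_right_injective (α := fun _ ↦ ℕ) 0 h)
  · have hcons : (Fin.cons 0 ((Fin.tail c ∘ σ.symm) ∘ σ) : Fin (n + 1) → ℕ) = c := by
      rw [Function.comp_assoc, Equiv.symm_comp_self, Function.comp_id, ← (mem_lexChains.mp hc).1,
        Fin.cons_self_tail]
    refine ⟨Fin.tail c ∘ σ.symm, Finset.mem_filter.mpr ?_, hcons⟩
    rwa [← cons_zero_comp_mem_lexChains ha, hcons]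

theorem sum_perm_card_lexChains {a : Fin n → α} (ha : a.Injective) (b : α) (k : ℕ) :
    ∑ σ : Equiv.Perm (Fin n), #(lexChains (Fin.cons b (a ∘ σ) : Fin (n + 1) → α) k) =
      ∏ v, (k + if b ≤ a v then 1 else 0) := by
  simp only [← card_filter_sort_eq_card_lexChains ha]
  rw [← Finset.card_eq_sum_card_fiberwise fun _ _ ↦ Finset.mem_coe.mpr (Finset.mem_univ _),
    Fintype.card_piFinset]
  refine Finset.prod_congr rfl fun v _ ↦ ?_
  split_ifs <;> simp

open PowerSeries

theorem sum_perm_X_pow_desCount_cons {R : Type*} [CommRing R] {a : Fin n → α} (ha : a.Injective)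
    (b : α) :
    ∑ σ : Equiv.Perm (Fin n), (X : R⟦X⟧) ^ desCount (Fin.cons b (a ∘ σ) : Fin (n + 1) → α) =
      (1 - X) ^ (n + 1) * mk fun k ↦ ∏ v, ((k : R) + if b ≤ a v then 1 else 0) := by
  simp only [← one_sub_X_pow_mul_mk_card_lexChains, ← Finset.mul_sum]
  congr 1
  ext k
  simpa using congrArg (Nat.cast (R := R)) (sum_perm_card_lexChains ha b k)

end Worpitzky

namespace SignedPerm

section Letters

variable {n : ℕ}

/-- The letter of absolute value `v + 1`, negative if `neg` is true. -/
def signedLetter (v : Fin n) (neg : Bool) : ℤ := (if neg then -1 else 1) * ((v : ℕ) + 1)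

/-- The word of `p` as a function on `Fin n`, so that `p.letters i` is `π_{i+1}`. -/
def letters (p : SignedPerm n) (i : Fin n) : ℤ := signedLetter (p.1 i) (p.2 i)

theorem abs_signedLetter (v : Fin n) (neg : Bool) : |signedLetter v neg| = (v : ℕ) + 1 := by
  have hv : |(v : ℤ) + 1| = v + 1 := abs_of_nonneg (by positivity)
  cases neg <;> simp only [signedLetter, abs_mul, hv] <;> simp

theorem signedLetter_not (v : Fin n) (neg : Bool) :
    signedLetter v (!neg) = -signedLetter v neg := by
  cases neg <;> simp [signedLetter]

theorem signedLetter_injective (s : Fin n → Bool) :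
    (fun v ↦ signedLetter v (s v)).Injective := by
  intro v w h
  simpa [abs_signedLetter, ← Fin.ext_iff] using congrArg abs h

theorem abs_letters (p : SignedPerm n) (i : Fin n) : |p.letters i| = (p.1 i : ℕ) + 1 :=
  abs_signedLetter _ _

theorem letters_ne_zero (p : SignedPerm n) (i : Fin n) : p.letters i ≠ 0 := by
  rw [← abs_pos, abs_letters]
  positivity

theorem abs_letters_injective (p : SignedPerm n) : (fun i ↦ |p.letters i|).Injective := by
  intro i j h
  simpa [abs_letters, ← Fin.ext_iff] using h

theorem word_succ (p : SignedPerm n) (i : Fin n) : p.word (i + 1) = p.letters i :=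
  dif_pos ⟨by omega, by omega⟩

theorem entry_succ (p : SignedPerm n) (i : Fin n) : p.entry (i + 1) = p.letters i :=
  (if_neg (Nat.succ_ne_zero _)).trans (p.word_succ i)

theorem sum_comp_letters {M : Type*} [AddCommMonoid M] (F : (Fin n → ℤ) → M) :
    ∑ p : SignedPerm n, F p.letters =
      ∑ s : Fin n → Bool, ∑ σ : Equiv.Perm (Fin n), F ((fun v ↦ signedLetter v (s v)) ∘ σ) := by
  rw [Fintype.sum_prod_type, Finset.sum_comm (t := (Finset.univ : Finset (Equiv.Perm (Fin n))))]
  refine Finset.sum_congr rfl fun σ _ ↦ ?_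
  exact (Equiv.sum_comp (Equiv.arrowCongr σ.symm (Equiv.refl Bool)) _).symm

open PowerSeries

variable {R : Type*} [CommRing R]

theorem sum_X_pow_desCount_cons_letters (n : ℕ) (b : ℤ) :
    ∑ p : SignedPerm n, (X : R⟦X⟧) ^ desCount (Fin.cons b p.letters : Fin (n + 1) → ℤ) =
      (1 - X) ^ (n + 1) *
        mk fun k ↦ ∏ v : Fin n, ∑ neg, ((k : R) + if b ≤ signedLetter v neg then 1 else 0) := by
  rw [sum_comp_letters fun w ↦ (X : R⟦X⟧) ^ desCount (Fin.cons b w : Fin (n + 1) → ℤ)]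
  simp only [sum_perm_X_pow_desCount_cons (signedLetter_injective _), ← Finset.mul_sum,
    Fintype.prod_sum]
  congr 1
  ext k
  simp

theorem sum_X_pow_desCount_cons_zero_letters (n : ℕ) :
    ∑ p : SignedPerm n, (X : R⟦X⟧) ^ desCount (Fin.cons 0 p.letters : Fin (n + 1) → ℤ) =
      (1 - X) ^ (n + 1) * mk fun k ↦ (2 * (k : R) + 1) ^ n := by
  have factor (k : ℕ) (v : Fin n) :
      ∑ neg, ((k : R) + if 0 ≤ signedLetter v neg then 1 else 0) = 2 * k + 1 := by
    have neg_letter : ¬0 ≤ signedLetter v true := by simp only [signedLetter, if_true]; omega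
    have pos_letter : 0 ≤ signedLetter v false := by
      simp only [signedLetter, Bool.false_eq_true, if_false]; omega
    rw [Fintype.sum_bool, if_neg neg_letter, if_pos pos_letter]
    ring
  simp only [sum_X_pow_desCount_cons_letters, factor, Finset.prod_const, Finset.card_univ,
    Fintype.card_fin]

theorem sum_X_pow_desCount_letters (n : ℕ) :
    ∑ p : SignedPerm (n + 1), (X : R⟦X⟧) ^ desCount p.letters =
      (1 - X) ^ (n + 2) * mk fun k ↦ (2 * (k + 1 : R)) ^ (n + 1) := by
  -- An initial letter below all others leaves the descents unchanged.
  have below (v : Fin (n + 1)) (neg : Bool) : -(n + 1 : ℤ) ≤ signedLetter v neg := by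
    have := neg_abs_le (signedLetter v neg)
    rw [abs_signedLetter] at this
    omega
  have cons_below (p : SignedPerm (n + 1)) :
      desCount (Fin.cons (-(n + 1 : ℤ)) p.letters : Fin (n + 2) → ℤ) = desCount p.letters := by
    rw [desCount_cons, letters, if_neg (below _ _).not_gt, zero_add]
  have factor (k : ℕ) (v : Fin (n + 1)) :
      ∑ neg, ((k : R) + if -(n + 1 : ℤ) ≤ signedLetter v neg then 1 else 0) = 2 * (k + 1) := by
    simp only [below, if_true, Fintype.sum_bool]
    ring
  simp only [← cons_below, sum_X_pow_desCount_cons_letters, factor, Finset.prod_const,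
    Finset.card_univ, Fintype.card_fin]

end Letters

end SignedPerm

theorem even_card_update_not {ι : Type*} [Fintype ι] [DecidableEq ι] (s : ι → Bool) (i : ι) :
    Even #{j | Function.update s i (!s i) j = true} ↔ ¬Even #{j | s j = true} := by
  have card_eq (s : ι → Bool) :
      #{j | s j = true} = (s i).toNat + ∑ j ∈ Finset.univ.erase i, (s j).toNat := by
    rw [Finset.card_filter, ← Finset.add_sum_erase _ _ (Finset.mem_univ i)]
    simp only [Bool.toNat, Bool.cond_eq_ite]
  have sum_update : ∑ j ∈ Finset.univ.erase i, (Function.update s i (!s i) j).toNat =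
      ∑ j ∈ Finset.univ.erase i, (s j).toNat :=
    Finset.sum_congr rfl fun j hj ↦ by rw [Function.update_of_ne (Finset.ne_of_mem_erase hj)]
  rw [card_eq, card_eq s, sum_update, Function.update_self]
  cases s i <;> simp [parity_simps]

namespace SignedPerm

section FlipSign

variable {n : ℕ}

/-- Change the sign of the letter in position `i`. -/
def flipSign (i : Fin n) (p : SignedPerm n) : SignedPerm n :=
  (p.1, Function.update p.2 i (!p.2 i))

/-- Change the sign of the letter `±1`. -/
def flipOne (p : SignedPerm (n + 1)) : SignedPerm (n + 1) := flipSign (p.1.symm 0) p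

theorem flipSign_involutive (i : Fin n) : (flipSign i).Involutive := fun p ↦ by simp [flipSign]

theorem flipOne_involutive : (flipOne : SignedPerm (n + 1) → SignedPerm (n + 1)).Involutive :=
  fun p ↦ flipSign_involutive (p.1.symm 0) p

theorem letters_flipSign (i : Fin n) (p : SignedPerm n) :
    (flipSign i p).letters = Function.update p.letters i (-p.letters i) := by
  ext j
  obtain rfl | hj := eq_or_ne j i
  · simp [letters, flipSign, signedLetter_not]
  · simp [letters, flipSign, hj]

theorem letters_flipOne (p : SignedPerm (n + 1)) (i : Fin (n + 1)) :
    (flipOne p).letters i = if |p.letters i| = 1 then -p.letters i else p.letters i := by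
  have abs_eq_one_iff : |p.letters i| = 1 ↔ i = p.1.symm 0 := by
    rw [abs_letters, Equiv.eq_symm_apply, Fin.ext_iff, Fin.val_zero]
    omega
  rw [flipOne, letters_flipSign, Function.update_apply]
  simp only [abs_eq_one_iff]
  grind

theorem inD_flipSign (i : Fin n) (p : SignedPerm n) : (flipSign i p).inD ↔ ¬p.inD :=
  even_card_update_not p.2 i

theorem inD_flipOne (p : SignedPerm (n + 1)) : (flipOne p).inD ↔ ¬p.inD := inD_flipSign _ p

theorem letters_flipOne_lt_iff (p : SignedPerm (n + 1)) {i j : Fin (n + 1)} (hij : i ≠ j) :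
    (flipOne p).letters i < (flipOne p).letters j ↔ p.letters i < p.letters j := by
  have abs_ne : |p.letters i| ≠ |p.letters j| := p.abs_letters_injective.ne hij
  have hi := p.letters_ne_zero i
  have hj := p.letters_ne_zero j
  rw [letters_flipOne, letters_flipOne]
  grind

theorem abs_letters_flipOne_lt_iff (p : SignedPerm (n + 1)) {i j : Fin (n + 1)} (hij : i ≠ j) :
    |(flipOne p).letters i| < (flipOne p).letters j ↔ |p.letters i| < p.letters j := by
  have abs_ne : |p.letters i| ≠ |p.letters j| := p.abs_letters_injective.ne hij
  have hi := p.letters_ne_zero i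
  rw [letters_flipOne, letters_flipOne]
  grind

theorem sum_filter_inD_comp {M : Type*} [AddCommMonoid M] {φ : SignedPerm n → SignedPerm n}
    (hφ : φ.Bijective) (hD : ∀ p, (φ p).inD ↔ ¬p.inD) (f : SignedPerm n → M) :
    ∑ p with p.inD, f (φ p) = ∑ p with ¬p.inD, f p := by
  rw [Finset.sum_filter, Finset.sum_filter, ← hφ.sum_comp fun p ↦ ite (¬p.inD) (f p) 0]
  simp only [hD, not_not]

end FlipSign

section Descents

variable {m : ℕ}

/-- The number of descents of the word of `p` at the positions `2, 3, …`. -/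
def tailDesCount (p : SignedPerm (m + 2)) : ℕ := desCount (Fin.tail p.letters)

theorem entry_zero_s17 (p : SignedPerm (m + 2)) : p.entry 0 = -p.letters 1 :=
  (if_pos rfl).trans (congrArg _ (p.word_succ 1))

theorem zero_mem_ddes (p : SignedPerm (m + 2)) : 0 ∈ p.ddes ↔ p.letters 0 < -p.letters 1 := by
  rw [ddes, Finset.mem_filter, entry_zero_s17, ← entry_succ p 0]
  simp

theorem one_mem_ddes (p : SignedPerm (m + 2)) : 1 ∈ p.ddes ↔ p.letters 1 < p.letters 0 := by
  rw [ddes, Finset.mem_filter, ← entry_succ p 0, ← entry_succ p 1]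
  simp

theorem type1_iff (p : SignedPerm (m + 2)) : p.type1 ↔ |p.letters 1| < p.letters 0 := by
  have abs_ne : |p.letters 0| ≠ |p.letters 1| := p.abs_letters_injective.ne Fin.zero_ne_one
  rw [type1, zero_mem_ddes, one_mem_ddes]
  grind

theorem type0Ge2_iff (p : SignedPerm (m + 2)) : p.type0Ge2 ↔ |p.letters 1| < -p.letters 0 := by
  have abs_ne : |p.letters 0| ≠ |p.letters 1| := p.abs_letters_injective.ne Fin.zero_ne_one
  rw [type0Ge2, zero_mem_ddes, one_mem_ddes]
  grind

theorem d_eq_desCount_cons (p : SignedPerm (m + 2)) :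
    p.d = desCount (Fin.cons (-p.letters 1) p.letters : Fin (m + 3) → ℤ) := by
  rw [d, ddes, Finset.card_filter, Finset.sum_range, desCount]
  refine Finset.sum_congr rfl fun i _ ↦ ?_
  rw [entry_succ]
  induction i using Fin.cases with
  | zero => rw [Fin.val_zero, entry_zero_s17]; rfl
  | succ i => rw [Fin.val_succ, ← Fin.val_castSucc, entry_succ]; rfl

theorem desCount_letters (p : SignedPerm (m + 2)) :
    desCount p.letters = (if p.letters 1 < p.letters 0 then 1 else 0) + p.tailDesCount := by
  conv_lhs => rw [← Fin.cons_self_tail p.letters, desCount_cons]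
  rfl

theorem d_of_abs_lt_abs {p : SignedPerm (m + 2)} (h : |p.letters 1| < |p.letters 0|) :
    p.d = p.tailDesCount + 1 := by
  rw [d_eq_desCount_cons, desCount_cons, desCount_letters]
  grind

theorem tailDesCount_flipSign_zero (p : SignedPerm (m + 2)) :
    (flipSign 0 p).tailDesCount = p.tailDesCount := by
  rw [tailDesCount, letters_flipSign, Fin.tail_update_zero, tailDesCount]

theorem tailDesCount_flipOne (p : SignedPerm (m + 2)) :
    (flipOne p).tailDesCount = p.tailDesCount := by
  rw [tailDesCount, tailDesCount, desCount, desCount]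
  refine Finset.sum_congr rfl fun i _ ↦ ?_
  have hne : i.succ.succ ≠ i.castSucc.succ := by simp [Fin.ext_iff]
  exact if_congr (letters_flipOne_lt_iff p hne) rfl rfl

end Descents

end SignedPerm

section DescentSums

variable {R : Type*} [CommRing R]

/-- The difference `(1 + x) x^{des_A w} - 2 x^{des_B w}` of the weights of type `A` and type `B`
descents, where `des_B w` counts the descents of `0 w`; it nearly cancels between a word and its
partner with the opposite first letter. -/
def desDefect {α : Type*} [LinearOrder α] [Zero α] {n : ℕ} (x : R) (w : Fin (n + 1) → α) : R :=
  (1 + x) * x ^ desCount w - 2 * x ^ desCount (Fin.cons 0 w : Fin (n + 2) → α)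

theorem desDefect_cons_add_desDefect_cons_neg {α : Type*} [AddCommGroup α] [LinearOrder α]
    [IsOrderedAddMonoid α] {n : ℕ} (x : R) {u : α} {w : Fin (n + 1) → α}
    (hu : u ≠ 0) (huw : |u| ≠ |w 0|) :
    desDefect x (Fin.cons u w : Fin (n + 2) → α) + desDefect x (Fin.cons (-u) w : Fin (n + 2) → α) =
      if |w 0| < |u| then (1 - x) ^ 2 * x ^ desCount w else 0 := by
  wlog hpos : 0 < u generalizing u
  · simpa only [neg_neg, abs_neg, add_comm] using
      this (neg_ne_zero.mpr hu) (by rwa [abs_neg]) (neg_pos.mpr (hu.lt_of_le (not_lt.mp hpos)))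
  have hneg : -u < 0 := neg_neg_of_pos hpos
  simp only [desDefect, desCount_cons, Fin.cons_zero, hpos.not_gt, hneg, if_true, if_false,
    abs_of_pos hpos]
  rw [abs_of_pos hpos] at huw
  obtain hlt | hgt := huw.lt_or_gt
  · obtain h | h := lt_abs.mp hlt
    · simp only [hlt.not_gt, h.not_gt, (hneg.trans (hpos.trans h)).not_gt, if_false]
      ring
    · have h' : w 0 < -u := lt_neg.mp h
      simp only [hlt.not_gt, h', h'.trans (hneg.trans hpos), if_true, if_false]
      ring
  · obtain ⟨h, h'⟩ := abs_lt.mp hgt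
    simp only [hgt, h.not_gt, h', if_true, if_false]
    ring

namespace SignedPerm

variable {m : ℕ}

theorem desDefect_letters_add_flipSign_zero (x : R) (p : SignedPerm (m + 2)) :
    desDefect x p.letters + desDefect x (flipSign 0 p).letters =
      if |p.letters 1| < |p.letters 0| then (1 - x) ^ 2 * x ^ p.tailDesCount else 0 := by
  have flip_eq_cons : (flipSign 0 p).letters = Fin.cons (-p.letters 0) (Fin.tail p.letters) := by
    rw [letters_flipSign, ← Fin.update_cons_zero (p.letters 0), Fin.cons_self_tail]
  have pairing := desDefect_cons_add_desDefect_cons_neg x (w := Fin.tail p.letters)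
    (p.letters_ne_zero 0) (p.abs_letters_injective.ne Fin.zero_ne_one)
  rwa [Fin.cons_self_tail, ← flip_eq_cons] at pairing

theorem sum_inD_type1_eq (x : R) :
    ∑ p : SignedPerm (m + 2) with p.inD ∧ p.type1, x ^ p.d =
      ∑ p : SignedPerm (m + 2) with p.inD,
        if |p.letters 1| < p.letters 0 then x ^ (p.tailDesCount + 1) else 0 := by
  rw [← Finset.filter_filter, Finset.sum_filter]
  refine Finset.sum_congr rfl fun p _ ↦ ?_
  simp only [type1_iff]
  exact ite_congr rfl (fun h ↦ by rw [d_of_abs_lt_abs (h.trans_le (le_abs_self _))]) fun _ ↦ rfl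

theorem sum_inD_type0Ge2_eq (x : R) :
    ∑ p : SignedPerm (m + 2) with p.inD ∧ p.type0Ge2, x ^ p.d =
      ∑ p : SignedPerm (m + 2) with p.inD,
        if |p.letters 1| < -p.letters 0 then x ^ (p.tailDesCount + 1) else 0 := by
  rw [← Finset.filter_filter, Finset.sum_filter]
  refine Finset.sum_congr rfl fun p _ ↦ ?_
  simp only [type0Ge2_iff]
  exact ite_congr rfl (fun h ↦ by rw [d_of_abs_lt_abs (h.trans_le (neg_le_abs _))]) fun _ ↦ rfl

theorem sum_inD_eq_sum_not_inD (x : R) :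
    (∑ p : SignedPerm (m + 2) with p.inD,
        if |p.letters 1| < p.letters 0 then x ^ (p.tailDesCount + 1) else 0) =
      ∑ p : SignedPerm (m + 2) with ¬p.inD,
        if |p.letters 1| < p.letters 0 then x ^ (p.tailDesCount + 1) else 0 := by
  rw [← sum_filter_inD_comp flipOne_involutive.bijective inD_flipOne]
  simp only [abs_letters_flipOne_lt_iff _ Fin.zero_ne_one.symm, tailDesCount_flipOne]

theorem sum_inD_type0Ge2_eq_sum_inD_type1 (x : R) :
    ∑ p : SignedPerm (m + 2) with p.inD ∧ p.type0Ge2, x ^ p.d =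
      ∑ p : SignedPerm (m + 2) with p.inD ∧ p.type1, x ^ p.d := by
  rw [sum_inD_type1_eq, sum_inD_eq_sum_not_inD, sum_inD_type0Ge2_eq,
    ← sum_filter_inD_comp (flipSign_involutive 0).bijective (inD_flipSign 0)]
  simp [letters_flipSign, tailDesCount_flipSign_zero]

theorem four_mul_sum_inD_type1 (x : R) :
    4 * ∑ p : SignedPerm (m + 2) with p.inD ∧ p.type1, x ^ p.d =
      ∑ p : SignedPerm (m + 2),
        if |p.letters 1| < |p.letters 0| then x ^ (p.tailDesCount + 1) else 0 := by
  set f : SignedPerm (m + 2) → R := fun p ↦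
    if |p.letters 1| < p.letters 0 then x ^ (p.tailDesCount + 1) else 0 with hf
  have double_D : 2 * ∑ p : SignedPerm (m + 2) with p.inD ∧ p.type1, x ^ p.d = ∑ p, f p := by
    rw [two_mul, sum_inD_type1_eq]
    nth_rw 2 [sum_inD_eq_sum_not_inD]
    exact Finset.sum_filter_add_sum_filter_not _ _ _
  have double_f : 2 * ∑ p, f p = ∑ p, (f p + f (flipSign 0 p)) := by
    rw [Finset.sum_add_distrib, (flipSign_involutive 0).bijective.sum_comp, two_mul]
  calc 4 * ∑ p : SignedPerm (m + 2) with p.inD ∧ p.type1, x ^ p.d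
      = ∑ p, (f p + f (flipSign 0 p)) := by rw [← double_f, ← double_D]; ring
    _ = _ := Finset.sum_congr rfl fun p _ ↦ by
      simp only [hf, letters_flipSign, tailDesCount_flipSign_zero, Function.update_self,
        Function.update_of_ne Fin.zero_ne_one.symm]
      grind

theorem two_mul_mul_sum_desDefect (x : R) :
    2 * x * ∑ p : SignedPerm (m + 2), desDefect x p.letters =
      4 * (1 - x) ^ 2 * ∑ p : SignedPerm (m + 2) with p.inD ∧ p.type1, x ^ p.d := by
  calc 2 * x * ∑ p : SignedPerm (m + 2), desDefect x p.letters
      = x * ∑ p : SignedPerm (m + 2),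
          (desDefect x p.letters + desDefect x (flipSign 0 p).letters) := by
        rw [Finset.sum_add_distrib,
          (flipSign_involutive 0).bijective.sum_comp fun p ↦ desDefect x p.letters]
        ring
    _ = (1 - x) ^ 2 * (4 * ∑ p : SignedPerm (m + 2) with p.inD ∧ p.type1, x ^ p.d) := by
        rw [four_mul_sum_inD_type1, Finset.mul_sum, Finset.mul_sum]
        refine Finset.sum_congr rfl fun p _ ↦ ?_
        rw [desDefect_letters_add_flipSign_zero]
        split_ifs <;> ring
    _ = _ := by ring

end SignedPerm

end DescentSums

section GeneratingFunction

open PowerSeries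

/-- The power series factor of the generating function of the sub-Eulerian numbers,
`Σ_{k≥0} (2^{n-1}((k+1)^n + k^n) - (2k+1)^n) t^k`. -/
noncomputable def subEulerianSeries (n : ℕ) : ℚ⟦X⟧ :=
  mk fun k ↦ (2 : ℚ) ^ (n - 1) * (((k : ℚ) + 1) ^ n + (k : ℚ) ^ n) - (2 * (k : ℚ) + 1) ^ n

theorem one_add_X_mul_mk_sub_two_mul_mk (n : ℕ) :
    (1 + X) * mk (fun k ↦ (2 * (k + 1 : ℚ)) ^ (n + 1)) -
        2 * mk (fun k ↦ (2 * (k : ℚ) + 1) ^ (n + 1)) =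
      2 * subEulerianSeries (n + 1) := by
  have shift : X * mk (fun k ↦ (2 * (k + 1 : ℚ)) ^ (n + 1)) =
      mk fun k ↦ (2 * (k : ℚ)) ^ (n + 1) := by
    ext (_ | k)
    · simp
    · simp [coeff_succ_X_mul]
  rw [add_mul, one_mul, shift, subEulerianSeries]
  ext k
  simp only [two_mul (mk _), map_add, map_sub, coeff_mk, add_tsub_cancel_right, mul_pow]
  ring

theorem sum_desDefect_letters (n : ℕ) :
    ∑ p : SignedPerm (n + 1), desDefect (X : ℚ⟦X⟧) p.letters =
      2 * (1 - X) ^ (n + 2) * subEulerianSeries (n + 1) := by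
  simp only [desDefect, Finset.sum_sub_distrib, ← Finset.mul_sum,
    SignedPerm.sum_X_pow_desCount_letters, SignedPerm.sum_X_pow_desCount_cons_zero_letters]
  linear_combination (1 - X) ^ (n + 2) * one_add_X_mul_mk_sub_two_mul_mk n

theorem sum_X_pow_d_inD_type1 (m : ℕ) :
    ∑ p : SignedPerm (m + 2) with p.inD ∧ p.type1, (X : ℚ⟦X⟧) ^ p.d =
      X * (1 - X) ^ (m + 1) * subEulerianSeries (m + 2) := by
  have hne : 4 * (1 - X : ℚ⟦X⟧) ^ 2 ≠ 0 := fun h ↦ by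
    simpa [map_ofNat constantCoeff 4] using congrArg constantCoeff h
  have doubled := SignedPerm.two_mul_mul_sum_desDefect (m := m) (X : ℚ⟦X⟧)
  rw [sum_desDefect_letters] at doubled
  apply mul_left_cancel₀ hne
  linear_combination -doubled

end GeneratingFunction

/-- **Corollary 4.5 (i).** In `ℚ⟦t⟧`:
`D_n^{0,≥2}(t) = t(1-t)^{n-1}·Σ_{k≥0}(2^{n-1}((k+1)^n + k^n) - (2k+1)^n)t^k`,
and the same holds for `D_n^1(t)`. -/
theorem subEulerian_rational_gf (n : ℕ) (hn : 2 ≤ n) :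
    ((polyD0Ge2 n : Polynomial ℚ) : PowerSeries ℚ) =
      PowerSeries.X * (1 - PowerSeries.X) ^ (n - 1) *
        PowerSeries.mk (fun k => (2 : ℚ) ^ (n - 1) * (((k : ℚ) + 1) ^ n + (k : ℚ) ^ n)
          - (2 * (k : ℚ) + 1) ^ n) ∧
    ((polyD1 n : Polynomial ℚ) : PowerSeries ℚ) =
      PowerSeries.X * (1 - PowerSeries.X) ^ (n - 1) *
        PowerSeries.mk (fun k => (2 : ℚ) ^ (n - 1) * (((k : ℚ) + 1) ^ n + (k : ℚ) ^ n)
          - (2 * (k : ℚ) + 1) ^ n) := by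
  obtain ⟨m, rfl⟩ := Nat.exists_eq_add_of_le' hn
  have type1_eq : ((polyD1 (m + 2) : Polynomial ℚ) : PowerSeries ℚ) =
      ∑ p : SignedPerm (m + 2) with p.inD ∧ p.type1, PowerSeries.X ^ p.d := by
    rw [polyD1, ← Polynomial.coeToPowerSeries.ringHom_apply, map_sum]
    simp
  have type0Ge2_eq : ((polyD0Ge2 (m + 2) : Polynomial ℚ) : PowerSeries ℚ) =
      ∑ p : SignedPerm (m + 2) with p.inD ∧ p.type0Ge2, PowerSeries.X ^ p.d := by
    rw [polyD0Ge2, ← Polynomial.coeToPowerSeries.ringHom_apply, map_sum]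
    simp
  rw [type0Ge2_eq, type1_eq, SignedPerm.sum_inD_type0Ge2_eq_sum_inD_type1, and_self]
  exact sum_X_pow_d_inD_type1 m
end
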